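/- arXiv:2209.14176 — 4 statements merged into one kernel-verified Lean document; each statement's English description precedes it below -/
import Mathlib

section
/- Let (G,w,k) be a tuple-weighted graph and let e be an edge of G. Then X_{(G,w,k)} = X_{(G−e,w,k)} − X_{(G/e,w/e,k)}, where G−e deletes the edge e, and where if e is a loop then G/e = G−e with w/e = w, while if e = v₁v₂ with v₁ ≠ v₂ then G/e is the graph obtained by identifying v₁ and v₂ into a new vertex v* (retaining all other edges, possibly as multi-edges or loops) and (w/e)(v) = w(v) for v ≠ v* and (w/e)(v*) = w(v₁) + w(v₂) with componentwise addition. -/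
/-!
The identity is checked coefficient by coefficient. Nonzero weights make the set of colorings with
a prescribed monomial finite (`finite_colorings`), so the coefficients are honest cardinalities.
The proper colorings of `G - e` split according to whether the ends `v₁`, `v₂` of `e` get distinct
colors, in which case they are the proper colorings of `G` (`proper_iff_del`), or the same color.
The latter are the pullbacks along `contractFun` of the proper colorings of `G / e`
(`proper_contract_iff`), and pulling back preserves the monomial (`sum_wtF_contract`) because the
weight of the merged vertex is `w v₁ + w v₂`. If `e` is a loop then `G` has no proper coloring and
both sides vanish.
-/

/-!
Statement 0: deletion–contraction for the chromatic k-multisymmetric function of a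
tuple-weighted graph, `X_{(G,w,k)} = X_{(G−e,w,k)} − X_{(G/e,w/e,k)}`.
-/

/-- A tuple-weighted graph on a vertex type `V`: a multiset of edges (unordered pairs
of vertices, loops and multi-edges allowed) together with a weight function
`w : V → ℤ_{≥0}^k`. -/
structure TWG (V : Type) (k : ℕ) where
  edges : Multiset (Sym2 V)
  w : V → Fin k → ℕ

/-- A coloring `κ : V → ℕ` is proper if the two endpoints of every edge receive
different colors. -/
def TWG.Proper {V : Type} {k : ℕ} (G : TWG V k) (κ : V → ℕ) : Prop :=
  ∀ u v : V, s(u, v) ∈ G.edges → κ u ≠ κ v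

/-- The exponent finsupp of the monomial `x_c^{(a 0, …, a (k-1))}`. -/
noncomputable def wtF {k : ℕ} (c : ℕ) (a : Fin k → ℕ) : (ℕ × Fin k) →₀ ℕ :=
  ∑ j : Fin k, Finsupp.single (c, j) (a j)

/-- The chromatic `k`-multisymmetric function `X_{(G,w,k)} = Σ_{κ proper} Π_v x_{κ(v)}^{w(v)}`,
given by its coefficients: the coefficient of a monomial `d` is the number of proper
colorings whose associated monomial is `d`. -/
noncomputable def Xms {V : Type} [Fintype V] {k : ℕ} (G : TWG V k) :
    MvPowerSeries (ℕ × Fin k) ℚ :=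
  fun d => (Nat.card {κ : V → ℕ // G.Proper κ ∧ ∑ v : V, wtF (κ v) (G.w v) = d} : ℚ)

/-- Deletion of (one copy of) the edge `e`. -/
def TWG.del {V : Type} [DecidableEq V] {k : ℕ} (G : TWG V k) (e : Sym2 V) : TWG V k :=
  ⟨G.edges.erase e, G.w⟩

/-- The map identifying `v₂` with `v₁` (the merged vertex `v*` is represented by `v₁`). -/
def contractFun {V : Type} [DecidableEq V] (v₁ v₂ : V) (h : v₁ ≠ v₂) (v : V) :
    {x : V // x ≠ v₂} :=
  if hv : v = v₂ then ⟨v₁, h⟩ else ⟨v, hv⟩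

/-- Contraction of the (non-loop) edge `e = v₁v₂`: the vertices `v₁, v₂` are identified
into a new vertex `v*`, all other edges are retained (possibly becoming multi-edges or
loops), and the weight of `v*` is `w(v₁) + w(v₂)` (componentwise). -/
def TWG.contract {V : Type} [DecidableEq V] {k : ℕ} (G : TWG V k) (v₁ v₂ : V)
    (h : v₁ ≠ v₂) : TWG {x : V // x ≠ v₂} k where
  edges := (G.edges.erase s(v₁, v₂)).map (Sym2.map (contractFun v₁ v₂ h))
  w := fun x => if x.val = v₁ then G.w v₁ + G.w v₂ else G.w x.val

/-- `X_{(G/e, w/e, k)}`: if `e = v₁v₂` is a loop then `G/e = G − e` and `w/e = w`;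
otherwise it is the chromatic multisymmetric function of the contraction. -/
noncomputable def Xcon {V : Type} [Fintype V] [DecidableEq V] {k : ℕ} (G : TWG V k)
    (v₁ v₂ : V) : MvPowerSeries (ℕ × Fin k) ℚ :=
  if h : v₁ = v₂ then Xms (G.del s(v₁, v₂)) else Xms (G.contract v₁ v₂ h)

theorem proper_iff_del {V : Type} [DecidableEq V] {k : ℕ} (G : TWG V k) {v₁ v₂ : V}
    (he : s(v₁, v₂) ∈ G.edges) (κ : V → ℕ) :
    G.Proper κ ↔ (G.del s(v₁, v₂)).Proper κ ∧ κ v₁ ≠ κ v₂ := by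
  constructor
  · intro h
    exact ⟨fun u v huv => h u v (Multiset.mem_of_mem_erase huv), h v₁ v₂ he⟩
  · rintro ⟨h, hne⟩ u v huv
    by_cases heq : s(u, v) = s(v₁, v₂)
    · rcases Sym2.eq_iff.1 heq with ⟨rfl, rfl⟩ | ⟨rfl, rfl⟩
      · exact hne
      · exact hne.symm
    · exact h u v ((Multiset.mem_erase_of_ne heq).2 huv)

theorem proper_contract_iff {V : Type} [DecidableEq V] {k : ℕ} (G : TWG V k) {v₁ v₂ : V}
    (h : v₁ ≠ v₂) (κ : {x : V // x ≠ v₂} → ℕ) :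
    (G.contract v₁ v₂ h).Proper κ ↔
      (G.del s(v₁, v₂)).Proper (κ ∘ contractFun v₁ v₂ h) := by
  constructor
  · intro hp u v huv
    exact hp _ _ (Multiset.mem_map.2 ⟨s(u, v), huv, Sym2.map_mk _ _ _⟩)
  · intro hp x y hxy
    obtain ⟨e, he, hxe⟩ := Multiset.mem_map.1 hxy
    induction e using Sym2.ind with
    | _ u v =>
      have huv : κ (contractFun v₁ v₂ h u) ≠ κ (contractFun v₁ v₂ h v) := hp u v he
      rw [Sym2.map_mk] at hxe
      rcases Sym2.eq_iff.1 hxe with ⟨rfl, rfl⟩ | ⟨rfl, rfl⟩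
      · exact huv
      · exact huv.symm

theorem wtF_add {k : ℕ} (c : ℕ) (a b : Fin k → ℕ) : wtF c (a + b) = wtF c a + wtF c b := by
  simp [wtF, Finset.sum_add_distrib]

theorem wtF_apply {k : ℕ} (c : ℕ) (a : Fin k → ℕ) (j : Fin k) : wtF c a (c, j) = a j := by
  classical
  simp [wtF, Finsupp.finsetSum_apply, Finsupp.single_apply]

/-- A coloring of `G / e` and its pullback to `G` have the same monomial. -/
theorem sum_wtF_contract {V : Type} [Fintype V] [DecidableEq V] {k : ℕ} (G : TWG V k)
    {v₁ v₂ : V} (h : v₁ ≠ v₂) (κ : {x : V // x ≠ v₂} → ℕ) :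
    ∑ v : V, wtF (κ (contractFun v₁ v₂ h v)) (G.w v) =
      ∑ x, wtF (κ x) ((G.contract v₁ v₂ h).w x) := by
  have hx : ∀ x : {x : V // x ≠ v₂}, wtF (κ x) ((G.contract v₁ v₂ h).w x) =
      wtF (κ x) (G.w x.val) + if x = ⟨v₁, h⟩ then wtF (κ x) (G.w v₂) else 0 := by
    rintro ⟨x, hx⟩
    by_cases hx1 : x = v₁
    · subst hx1
      simp [TWG.contract, wtF_add]
    · simp [TWG.contract, hx1]
  simp only [hx, Finset.sum_add_distrib, Finset.sum_ite_eq', Finset.mem_univ, if_true]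
  rw [← Finset.sum_erase_add _ _ (Finset.mem_univ v₂)]
  congr 1
  · rw [Finset.sum_subtype (p := fun x => x ≠ v₂) _ (by simp)]
    exact Finset.sum_congr rfl fun x _ => by simp [contractFun, x.2]
  · simp [contractFun]

/-- Every color `κ v` is the first index of a variable occurring in `d`, since `w v ≠ 0`; this
leaves finitely many choices for `κ`. -/
theorem finite_colorings {V : Type} [Fintype V] {k : ℕ} (w : V → Fin k → ℕ)
    (hw : ∀ v, w v ≠ 0) (d : (ℕ × Fin k) →₀ ℕ) :
    {κ : V → ℕ | ∑ v, wtF (κ v) (w v) = d}.Finite := by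
  classical
  refine (Set.Finite.pi' fun _ : V => (d.support.image Prod.fst).finite_toSet).subset ?_
  intro κ hκ v
  obtain ⟨j, hj⟩ := Function.ne_iff.1 (hw v)
  refine Finset.mem_coe.2 (Finset.mem_image.2 ⟨(κ v, j), ?_, rfl⟩)
  rw [Finsupp.mem_support_iff, ← (show _ = d from hκ), Finsupp.finsetSum_apply]
  intro h0
  have := (Finset.sum_eq_zero_iff.1 h0) v (Finset.mem_univ v)
  rw [wtF_apply] at this
  exact hj this

/-- Pulling back along `contractFun` identifies the colorings of `G / e` with the colorings of
`G - e` that agree at `v₁` and `v₂`. -/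
theorem card_contract {V : Type} [Fintype V] [DecidableEq V] {k : ℕ} (G : TWG V k)
    {v₁ v₂ : V} (h : v₁ ≠ v₂) (d : (ℕ × Fin k) →₀ ℕ) :
    Nat.card {κ : {x : V // x ≠ v₂} → ℕ // (G.contract v₁ v₂ h).Proper κ ∧
        ∑ x, wtF (κ x) ((G.contract v₁ v₂ h).w x) = d} =
      Nat.card {κ : V → ℕ // ((G.del s(v₁, v₂)).Proper κ ∧ ∑ v, wtF (κ v) (G.w v) = d) ∧
        κ v₁ = κ v₂} := by
  have hpull : ∀ κ : V → ℕ, κ v₁ = κ v₂ →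
      (fun x : {x : V // x ≠ v₂} => κ x) ∘ contractFun v₁ v₂ h = κ := by
    intro κ hκ
    funext v
    by_cases hv : v = v₂
    · subst hv
      simp [contractFun, hκ]
    · simp [contractFun, hv]
  refine Nat.card_congr
    { toFun := fun κ => ⟨κ.1 ∘ contractFun v₁ v₂ h,
        ⟨(proper_contract_iff G h κ.1).1 κ.2.1, (sum_wtF_contract G h κ.1).trans κ.2.2⟩,
        by simp [contractFun, h]⟩
      invFun := fun κ => ⟨fun x => κ.1 x, ?_, ?_⟩
      left_inv := ?_
      right_inv := ?_ }
  · rw [proper_contract_iff, hpull κ.1 κ.2.2]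
    exact κ.2.1.1
  · rw [← sum_wtF_contract]
    refine Eq.trans (Finset.sum_congr rfl fun v _ => ?_) κ.2.1.2
    exact congrArg (fun c => wtF c (G.w v)) (congrFun (hpull κ.1 κ.2.2) v)
  · rintro ⟨κ, hκ⟩
    apply Subtype.ext
    funext x
    simp [contractFun, x.2]
  · rintro ⟨κ, hκ⟩
    exact Subtype.ext (hpull κ hκ.2)

/-- deletion–contraction: for a tuple-weighted graph `(G,w,k)` whose
weights are nonzero tuples, and an edge `e = v₁v₂` of `G`,
`X_{(G,w,k)} = X_{(G−e,w,k)} − X_{(G/e,w/e,k)}`. -/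
theorem stmt0 {V : Type} [Fintype V] [DecidableEq V] {k : ℕ} (G : TWG V k)
    (hw : ∀ v : V, G.w v ≠ 0) (v₁ v₂ : V) (he : s(v₁, v₂) ∈ G.edges) :
    Xms G = Xms (G.del s(v₁, v₂)) - Xcon G v₁ v₂ := by
  by_cases h : v₁ = v₂
  · subst h
    funext d
    have hG : Xms G d = 0 := by
      have : IsEmpty {κ : V → ℕ // G.Proper κ ∧ ∑ v : V, wtF (κ v) (G.w v) = d} :=
        ⟨fun κ => κ.2.1 v₁ v₁ he rfl⟩
      simp [Xms]
    rw [hG, Xcon, dif_pos rfl, sub_self]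
    rfl
  · rw [Xcon, dif_neg h, eq_sub_iff_add_eq]
    funext d
    change ((Nat.card _ : ℕ) : ℚ) + ((Nat.card _ : ℕ) : ℚ) = ((Nat.card _ : ℕ) : ℚ)
    rw [card_contract, ← Nat.cast_add, Nat.cast_inj]
    let S : Set (V → ℕ) :=
      {κ | (G.del s(v₁, v₂)).Proper κ ∧ ∑ v, wtF (κ v) (G.w v) = d}
    have hS : S.Finite := (finite_colorings G.w hw d).subset fun κ hκ => hκ.2
    have key := Set.ncard_inter_add_ncard_sdiff_eq_ncard S {κ | κ v₁ = κ v₂} hS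
    have hdiff : {κ : V → ℕ | G.Proper κ ∧ ∑ v, wtF (κ v) (G.w v) = d} =
        S \ {κ | κ v₁ = κ v₂} := by
      ext κ
      have := proper_iff_del G he κ
      simp only [S, Set.mem_sdiff, Set.mem_ofPred_eq]
      tauto
    rw [← hdiff, add_comm] at key
    exact key
end

section
/- Let L = c₁H₁ + … + c_mH_m ∈ Γ_k be a linear combination of k-vertex-labelled graphs such that L ∈ Ker(X_k), and let π = π_{Γ₂} ∘ … ∘ π_{Γ_k} : Γ_k → Γ₁ be the composition of the folding maps. Then π(L) ∈ Ker(X₁); that is, Σ c_i X_{G_i} = 0 where G_i is H_i with all vertex-set distinctions forgotten and X is the ordinary chromatic symmetric function. -/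
/-!
Statement 8: projecting an element of `Ker(X_k)` down to `Γ₁` by composing the folding
maps yields an element of `Ker(X₁)`.
-/

/-- A `k`-vertex-labelled graph: the vertex set is `V₁ ⊔ … ⊔ V_k` where
`V_i = {(i, j) : j < α i}`, the vertices of `V_i` carry weight `ε_i`, and `edges` is a
multiset of unordered pairs of vertices (loops and multi-edges allowed). -/
structure LG (k : ℕ) where
  α : Fin k → ℕ
  edges : Multiset (Sym2 (Fin k × ℕ))
  valid : ∀ e ∈ edges, ∀ p ∈ e, p.2 < α p.1

/-- The vertex set of a `k`-vertex-labelled graph, as a type. -/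
abbrev LG.Vt {k : ℕ} (G : LG k) : Type := Σ i : Fin k, Fin (G.α i)

/-- A coloring of the vertices is proper if the endpoints of every edge receive
different colors. -/
def LG.Proper {k : ℕ} (G : LG k) (κ : G.Vt → ℕ) : Prop :=
  ∀ u v : G.Vt,
    s(((u.1, (u.2 : ℕ)) : Fin k × ℕ), ((v.1, (v.2 : ℕ)) : Fin k × ℕ)) ∈ G.edges →
      κ u ≠ κ v

/-- The chromatic `k`-multisymmetric function of a `k`-vertex-labelled graph, given by
its coefficients: a vertex `(i,j)` colored `c` contributes the variable `(x_c)_i`. -/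
noncomputable def XLG {k : ℕ} (G : LG k) : MvPowerSeries (ℕ × Fin k) ℚ :=
  fun d => (Nat.card {κ : G.Vt → ℕ //
    G.Proper κ ∧ ∑ v : G.Vt, Finsupp.single ((κ v, v.1) : ℕ × Fin k) 1 = d} : ℚ)

/-- `Γ_k`: formal ℚ-linear combinations of `k`-vertex-labelled graphs. -/
abbrev Gam (k : ℕ) := LG k →₀ ℚ

/-- The linear map `X_k : Γ_k → Λ_k`. -/
noncomputable def Xk (k : ℕ) : Gam k →ₗ[ℚ] MvPowerSeries (ℕ × Fin k) ℚ :=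
  Finsupp.linearCombination ℚ XLG

/-- The action of a tuple of permutations `σ ∈ S_{V₁} × … × S_{V_k}` on labels. -/
def permFun {k : ℕ} (α : Fin k → ℕ) (σ : ∀ i, Equiv.Perm (Fin (α i)))
    (p : Fin k × ℕ) : Fin k × ℕ :=
  if h : p.2 < α p.1 then (p.1, ((σ p.1) ⟨p.2, h⟩ : Fin (α p.1)).val) else p

/-- The graph `G_σ` obtained by applying `σ ∈ S_{V₁} × … × S_{V_k}` to the vertices. -/
def LG.permute {k : ℕ} (G : LG k) (σ : ∀ i, Equiv.Perm (Fin (G.α i))) : LG k where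
  α := G.α
  edges := G.edges.map (Sym2.map (permFun G.α σ))
  valid := by
    intro e he p hp
    rcases Multiset.mem_map.mp he with ⟨e₀, he₀, rfl⟩
    rcases Sym2.mem_map.mp hp with ⟨q, hq, rfl⟩
    have hqv := G.valid e₀ he₀ q hq
    simp [permFun, hqv]

/-- `T_iso(k)`: the set of all `ℓ_iso(G,σ) = G − G_σ`. -/
def Tiso (k : ℕ) : Set (Gam k) :=
  { x | ∃ (G : LG k) (σ : ∀ i, Equiv.Perm (Fin (G.α i))),
      x = Finsupp.single G 1 - Finsupp.single (G.permute σ) 1 }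

open Classical in
/-- Adding a multiset of (valid) extra edges to a graph, `G ⊎ M`. -/
noncomputable def LG.addE {k : ℕ} (G : LG k) (M : Multiset (Sym2 (Fin k × ℕ))) : LG k where
  α := G.α
  edges := G.edges + M.filter (fun e => ∀ p ∈ e, p.2 < G.α p.1)
  valid := by
    intro e he p hp
    rcases Multiset.mem_add.mp he with h | h
    · exact G.valid e h p hp
    · exact (Multiset.mem_filter.mp h).2 p hp

/-- For `t = (m,n,p)`, the vertex `a_t = (m, i_m)` with `i_m = 1` (0-indexed: 0). -/
def osA {k : ℕ} (t : Fin k × Fin k × Fin k) : Fin k × ℕ := (t.1, 0)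

/-- The vertex `b_t = (n, i_n)` with `i_n = 1 + δ_{mn}`. -/
def osB {k : ℕ} (t : Fin k × Fin k × Fin k) : Fin k × ℕ :=
  (t.2.1, if t.2.1 = t.1 then 1 else 0)

/-- The vertex `c_t = (p, i_p)` with `i_p = 1 + δ_{mp} + δ_{np}`. -/
def osC {k : ℕ} (t : Fin k × Fin k × Fin k) : Fin k × ℕ :=
  (t.2.2, (if t.2.2 = t.1 then 1 else 0) + (if t.2.2 = t.2.1 then 1 else 0))

/-- `T_os(k)`: the set of all extensions `Ext(ℓ_{os(t)}; G)` of the triangular modular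
relation by `k`-vertex-labelled graphs `G` whose vertex set contains `a_t, b_t, c_t`. -/
noncomputable def Tos (k : ℕ) : Set (Gam k) :=
  { x | ∃ (G : LG k) (t : Fin k × Fin k × Fin k),
      ((osA t).2 < G.α (osA t).1 ∧ (osB t).2 < G.α (osB t).1 ∧ (osC t).2 < G.α (osC t).1) ∧
      x = Finsupp.single (G.addE {s(osA t, osB t), s(osA t, osC t), s(osB t, osC t)}) 1
        - Finsupp.single (G.addE {s(osA t, osC t), s(osB t, osC t)}) 1
        - Finsupp.single (G.addE {s(osA t, osB t), s(osB t, osC t)}) 1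
        + Finsupp.single (G.addE {s(osB t, osC t)}) 1 }

/-- The label-folding map on vertices: the vertices `(k, j)` of `V_k` (the last block,
0-indexed `n` among `n+1` blocks) are relabelled `(k−1, α_{k−1} + j)`, folding `V_k`
into `V_{k−1}`. -/
def foldV (n : ℕ) (hn : 1 ≤ n) (α : Fin (n + 1) → ℕ) (p : Fin (n + 1) × ℕ) :
    Fin n × ℕ :=
  if h : p.1.val < n then (⟨p.1.val, h⟩, p.2)
  else (⟨n - 1, by omega⟩, α (⟨n - 1, by omega⟩ : Fin (n + 1)) + p.2)

/-- The block sizes after folding the last block into the previous one. -/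
def foldA (n : ℕ) (α : Fin (n + 1) → ℕ) : Fin n → ℕ :=
  fun i => if i.val = n - 1 then α i.castSucc + α (Fin.last n) else α i.castSucc

/-- Folding an `(n+1)`-vertex-labelled graph into an `n`-vertex-labelled graph. -/
def foldLG (n : ℕ) (hn : 1 ≤ n) (G : LG (n + 1)) : LG n where
  α := foldA n G.α
  edges := G.edges.map (Sym2.map (foldV n hn G.α))
  valid := by
    intro e he p hp
    rcases Multiset.mem_map.mp he with ⟨e₀, he₀, rfl⟩
    rcases Sym2.mem_map.mp hp with ⟨q, hq, rfl⟩
    have hqv := G.valid e₀ he₀ q hq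
    by_cases h : q.1.val < n
    · simp only [foldV, dif_pos h, foldA]
      by_cases h' : q.1.val = n - 1
      · rw [if_pos h']
        have : q.1.castSucc = _ := rfl
        have hc : (⟨q.1.val, h⟩ : Fin n).castSucc = q.1 := by
          apply Fin.ext; simp
        rw [hc]
        omega
      · rw [if_neg h']
        have hc : (⟨q.1.val, h⟩ : Fin n).castSucc = q.1 := by
          apply Fin.ext; simp
        rw [hc]
        exact hqv
    · simp only [foldV, dif_neg h, foldA, if_pos rfl]
      have h1 : q.1 = Fin.last n := by
        apply Fin.ext; simp only [Fin.val_last]; omega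
      have hc : ((⟨n - 1, by omega⟩ : Fin n)).castSucc = (⟨n - 1, by omega⟩ : Fin (n + 1)) := by
        apply Fin.ext; simp
      rw [hc]
      rw [h1] at hqv
      simp only [if_true]
      omega

/-- The composition `π_{Γ₂} ∘ … ∘ π_{Γ_k}` of the folding maps, sending a
`k`-vertex-labelled graph (`k = n+1`) to a `1`-vertex-labelled graph, i.e. forgetting
all vertex-set distinctions. -/
def foldToOne : (n : ℕ) → LG (n + 1) → LG 1
  | 0, G => G
  | n + 1, G => foldToOne n (foldLG (n + 1) (by omega) G)

/-!
Folding a block of vertices changes neither the underlying graph nor its proper colorings; it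
only changes which variable records a colored vertex. On chromatic functions, folding is thus
the substitution `(x_c)_i ↦ (x_c)_{f i}`, where `f` is the map on blocks (`XLG_relabel`,
`XLG_foldLG`). A power series only admits this substitution because every monomial has finitely
many preimages (`finite_fiber`); each coefficient after folding is then a finite sum of
coefficients before folding, over an index set that does not depend on the graph. Hence a linear
relation among the chromatic functions survives each fold (`Xk_fold_eq_zero`), and the theorem
follows by induction on the number of folds.
-/

/-! ### Relabelling vertices as a substitution of variables -/

/-- The label `(i, j)` of a vertex. -/
def LG.lab {k : ℕ} (G : LG k) (v : G.Vt) : Fin k × ℕ := (v.1, (v.2 : ℕ))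

/-- The type of proper colorings of `G` whose monomial is `x^d`; its cardinality is the
coefficient of `x^d` in `XLG G`. -/
abbrev LG.Col {k : ℕ} (G : LG k) (d : ℕ × Fin k →₀ ℕ) : Type :=
  {κ : G.Vt → ℕ // G.Proper κ ∧ ∑ v : G.Vt, Finsupp.single ((κ v, v.1) : ℕ × Fin k) 1 = d}

/-- Only the finitely many colors occurring in `d` can be used by a coloring with monomial
`x^d`. Without finiteness, `Nat.card` would take its junk value `0`. -/
lemma LG.finite_col {k : ℕ} (G : LG k) (d : ℕ × Fin k →₀ ℕ) : Finite (G.Col d) := by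
  have hfin : (Set.univ.pi fun _ : G.Vt => (Prod.fst '' (d.support : Set (ℕ × Fin k)))).Finite :=
    Set.Finite.pi fun _ => d.support.finite_toSet.image _
  refine Set.Finite.to_subtype (s := {κ : G.Vt → ℕ | G.Proper κ ∧
    ∑ v : G.Vt, Finsupp.single ((κ v, v.1) : ℕ × Fin k) 1 = d}) (hfin.subset ?_)
  rintro κ ⟨-, hκ⟩ v -
  refine ⟨(κ v, v.1), ?_, rfl⟩
  rw [Finset.mem_coe, Finsupp.mem_support_iff, ← hκ, Finsupp.finsetSum_apply]
  intro h0
  have h1 := (Finset.sum_eq_zero_iff.mp h0) v (Finset.mem_univ v)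
  simp at h1

/-- Substituting variables along a map of blocks `f`, the monomials that become `x^d` are
finite in number. -/
lemma finite_fiber {k l : ℕ} (f : Fin k → Fin l) (d : ℕ × Fin l →₀ ℕ) :
    {e : ℕ × Fin k →₀ ℕ | Finsupp.mapDomain (Prod.map id f) e = d}.Finite := by
  classical
  have hB : (Function.support fun p : ℕ × Fin k => d (Prod.map id f p)).Finite := by
    refine ((d.support.image Prod.fst ×ˢ (Finset.univ : Finset (Fin k))).finite_toSet).subset ?_
    rintro ⟨c, i⟩ hp
    simp only [Finset.coe_product, Set.mem_prod, Finset.mem_coe, Finset.mem_image,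
      Finset.mem_univ, and_true]
    exact ⟨(c, f i), Finsupp.mem_support_iff.mpr hp, rfl⟩
  refine (Set.finite_Iic (Finsupp.ofSupportFinite _ hB)).subset ?_
  rintro e rfl p
  -- Isolating the exponent at `p` shows that it is at most the exponent of its image.
  have h := congrArg (fun q => Finsupp.mapDomain (Prod.map id f) q (Prod.map id f p))
    (Finsupp.single_add_erase p e)
  simp only [Finsupp.mapDomain_add, Finsupp.mapDomain_single, Finsupp.add_apply,
    Finsupp.single_eq_same] at h
  change e p ≤ Finsupp.mapDomain (Prod.map id f) e (Prod.map id f p)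
  omega

/-- Relabelling vertices bijectively, with blocks moving along `f`, substitutes
`(x_c)_i ↦ (x_c)_{f i}` in the chromatic function: each coefficient for `G'` is the sum of the
coefficients for `G` over the monomials mapping to it. -/
lemma XLG_relabel {k l : ℕ} (f : Fin k → Fin l) (G : LG k) (G' : LG l) (Φ : G.Vt ≃ G'.Vt)
    (hf : ∀ v, (Φ v).1 = f v.1)
    (hadj : ∀ u v, s(G'.lab (Φ u), G'.lab (Φ v)) ∈ G'.edges ↔ s(G.lab u, G.lab v) ∈ G.edges)
    (d : ℕ × Fin l →₀ ℕ) :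
    MvPowerSeries.coeff d (XLG G') =
      ∑ e ∈ (finite_fiber f d).toFinset, MvPowerSeries.coeff e (XLG G) := by
  have hproper : ∀ κ : G'.Vt → ℕ, G'.Proper κ ↔ G.Proper (κ ∘ Φ) := by
    intro κ
    constructor
    · intro h u v huv
      exact h (Φ u) (Φ v) ((hadj u v).mpr huv)
    · intro h u v huv
      obtain ⟨u, rfl⟩ := Φ.surjective u
      obtain ⟨v, rfl⟩ := Φ.surjective v
      exact h u v ((hadj u v).mp huv)
  have hmon : ∀ κ : G'.Vt → ℕ,
      ∑ v : G'.Vt, Finsupp.single ((κ v, v.1) : ℕ × Fin l) 1 =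
        Finsupp.mapDomain (Prod.map id f)
          (∑ v : G.Vt, Finsupp.single (((κ ∘ Φ) v, v.1) : ℕ × Fin k) 1) := by
    intro κ
    rw [Finsupp.mapDomain_finsetSum, ← Φ.sum_comp]
    simp [Finsupp.mapDomain_single, hf]
  -- A coloring determines its monomial, so the first component is redundant for equality.
  have hext : ∀ x y : (Σ e : (finite_fiber f d).toFinset, G.Col e.1), x.2.1 = y.2.1 → x = y := by
    rintro ⟨⟨e, he⟩, κ, hκ, (rfl : _ = e)⟩ ⟨⟨e', he'⟩, κ', hκ', (rfl : _ = e')⟩ (rfl : κ = κ')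
    rfl
  let E : G'.Col d ≃ Σ e : (finite_fiber f d).toFinset, G.Col e.1 :=
    { toFun := fun κ => ⟨⟨∑ v : G.Vt, Finsupp.single (((κ.1 ∘ Φ) v, v.1) : ℕ × Fin k) 1,
          by simpa using (hmon κ.1).symm.trans κ.2.2⟩,
          ⟨κ.1 ∘ Φ, (hproper κ.1).mp κ.2.1, rfl⟩⟩
      invFun := fun x => ⟨x.2.1 ∘ Φ.symm, by
        have hc : (x.2.1 ∘ Φ.symm) ∘ Φ = x.2.1 := by ext v; simp
        refine ⟨(hproper _).mpr (by rw [hc]; exact x.2.2.1), ?_⟩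
        rw [hmon, hc, x.2.2.2]
        exact (finite_fiber f d).mem_toFinset.mp x.1.2⟩
      left_inv := fun κ => by ext v; simp
      right_inv := fun x => hext _ _ (by ext v; simp) }
  have : ∀ e : (finite_fiber f d).toFinset, Finite (G.Col e.1) := fun e => G.finite_col e.1
  change (Nat.card (G'.Col d) : ℚ) = ∑ e ∈ (finite_fiber f d).toFinset, (Nat.card (G.Col e) : ℚ)
  rw [Nat.card_congr E, Nat.card_sigma, Nat.cast_sum,
    Finset.sum_coe_sort (finite_fiber f d).toFinset fun e => (Nat.card (G.Col e) : ℚ)]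

/-! ### The folding bijection on vertices -/

/-- The map on blocks induced by folding the last block into the previous one. -/
def foldB (n : ℕ) (hn : 1 ≤ n) (i : Fin (n + 1)) : Fin n :=
  if h : i.val < n then ⟨i.val, h⟩ else ⟨n - 1, by omega⟩

lemma foldV_valid (n : ℕ) (hn : 1 ≤ n) (α : Fin (n + 1) → ℕ) (p : Fin (n + 1) × ℕ)
    (hp : p.2 < α p.1) : (foldV n hn α p).2 < foldA n α (foldV n hn α p).1 := by
  obtain ⟨i, j⟩ := p
  by_cases h : i.val < n
  · have hc : (⟨i.val, h⟩ : Fin n).castSucc = i := rfl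
    simp only [foldV, dif_pos h, foldA, hc]
    dsimp only at hp
    split_ifs <;> omega
  · obtain rfl : i = Fin.last n := Fin.ext (by simp; omega)
    simp only [foldV, dif_neg h, foldA, if_true]
    exact Nat.add_lt_add_left hp _

lemma foldV_inj (n : ℕ) (hn : 1 ≤ n) (α : Fin (n + 1) → ℕ) (p q : Fin (n + 1) × ℕ)
    (hp : p.2 < α p.1) (hq : q.2 < α q.1) (h : foldV n hn α p = foldV n hn α q) : p = q := by
  obtain ⟨i, j⟩ := p
  obtain ⟨i', j'⟩ := q
  have key : ∀ a : Fin (n + 1), a.val = n - 1 → α a = α ⟨n - 1, by omega⟩ :=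
    fun a ha => congrArg α (Fin.ext ha)
  dsimp only at hp hq
  by_cases h1 : i.val < n <;> by_cases h2 : i'.val < n <;>
    simp only [foldV, h1, h2, dif_pos, dif_neg, not_false_eq_true, Prod.mk.injEq,
      Fin.mk.injEq] at h
  · exact Prod.ext (Fin.ext h.1) h.2
  · have := key i h.1; omega
  · have := key i' h.1.symm; omega
  · exact Prod.ext (Fin.ext (by dsimp only; omega)) (by dsimp only; omega)

/-- The effect of folding on vertices. -/
def foldVt (n : ℕ) (hn : 1 ≤ n) (G : LG (n + 1)) (v : G.Vt) : (foldLG n hn G).Vt :=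
  ⟨(foldV n hn G.α (G.lab v)).1, ⟨(foldV n hn G.α (G.lab v)).2,
    foldV_valid n hn G.α (G.lab v) v.2.2⟩⟩

lemma LG.lab_injective {k : ℕ} (G : LG k) : Function.Injective G.lab := by
  rintro ⟨i, j⟩ ⟨i', j'⟩ h
  obtain ⟨h1, h2⟩ := Prod.mk.inj h
  dsimp only at h1 h2
  subst h1
  rw [Fin.ext h2]

lemma lab_foldVt (n : ℕ) (hn : 1 ≤ n) (G : LG (n + 1)) (v : G.Vt) :
    (foldLG n hn G).lab (foldVt n hn G v) = foldV n hn G.α (G.lab v) := rfl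

lemma foldVt_bijective (n : ℕ) (hn : 1 ≤ n) (G : LG (n + 1)) :
    Function.Bijective (foldVt n hn G) := by
  constructor
  · intro u v h
    exact G.lab_injective (foldV_inj n hn G.α _ _ u.2.2 v.2.2
      (congrArg (foldLG n hn G).lab h))
  · rintro ⟨i, j, hj⟩
    by_cases hlt : j < G.α i.castSucc
    · refine ⟨⟨i.castSucc, ⟨j, hlt⟩⟩, (foldLG n hn G).lab_injective ?_⟩
      rw [lab_foldVt]
      simp [LG.lab, foldV]
    · have hj' : j < foldA n G.α i := hj
      have hi : i.val = n - 1 := by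
        by_contra hne
        simp only [foldA, if_neg hne] at hj'
        exact hlt hj'
      simp only [foldA, if_pos hi] at hj'
      refine ⟨⟨Fin.last n, ⟨j - G.α i.castSucc, by omega⟩⟩, (foldLG n hn G).lab_injective ?_⟩
      have hc : (⟨n - 1, by omega⟩ : Fin (n + 1)) = i.castSucc := Fin.ext hi.symm
      rw [lab_foldVt]
      simp only [LG.lab, foldV, Fin.val_last, lt_irrefl, dif_neg, not_false_eq_true, hc]
      exact Prod.ext (Fin.ext hi.symm) (by dsimp only; omega)

lemma foldVt_adj (n : ℕ) (hn : 1 ≤ n) (G : LG (n + 1)) (u v : G.Vt) :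
    s((foldLG n hn G).lab (foldVt n hn G u), (foldLG n hn G).lab (foldVt n hn G v)) ∈
      (foldLG n hn G).edges ↔ s(G.lab u, G.lab v) ∈ G.edges := by
  rw [lab_foldVt, lab_foldVt]
  change _ ∈ G.edges.map (Sym2.map (foldV n hn G.α)) ↔ _
  rw [Multiset.mem_map]
  constructor
  · rintro ⟨e, he, heq⟩
    have hval := G.valid e he
    induction e using Sym2.ind with
    | _ p q =>
      -- Folding is injective only on labels of actual vertices, so validity of `e` matters.
      have hp := hval p (Sym2.mem_mk_left p q)
      have hq := hval q (Sym2.mem_mk_right p q)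
      rw [Sym2.map_mk, Sym2.eq_iff] at heq
      rcases heq with ⟨h1, h2⟩ | ⟨h1, h2⟩
      · rwa [← foldV_inj n hn G.α p (G.lab u) hp u.2.2 h1,
          ← foldV_inj n hn G.α q (G.lab v) hq v.2.2 h2]
      · rwa [← foldV_inj n hn G.α p (G.lab v) hp v.2.2 h1,
          ← foldV_inj n hn G.α q (G.lab u) hq u.2.2 h2, Sym2.eq_swap]
  · intro h
    exact ⟨_, h, rfl⟩

lemma XLG_foldLG (n : ℕ) (hn : 1 ≤ n) (G : LG (n + 1)) (d : ℕ × Fin n →₀ ℕ) :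
    MvPowerSeries.coeff d (XLG (foldLG n hn G)) =
      ∑ e ∈ (finite_fiber (foldB n hn) d).toFinset, MvPowerSeries.coeff e (XLG G) := by
  refine XLG_relabel (foldB n hn) G (foldLG n hn G)
    (Equiv.ofBijective _ (foldVt_bijective n hn G)) ?_ (foldVt_adj n hn G) d
  intro v
  change (foldV n hn G.α (G.lab v)).1 = foldB n hn v.1
  unfold foldV foldB
  by_cases h : v.1.val < n <;> simp [LG.lab, h]

/-! ### Linear relations under folding -/

lemma coeff_Xk {k : ℕ} (L : Gam k) (d : ℕ × Fin k →₀ ℕ) :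
    MvPowerSeries.coeff d (Xk k L) = L.sum fun G a => a * MvPowerSeries.coeff d (XLG G) := by
  simp [Xk, Finsupp.linearCombination_apply, Finsupp.sum]

/-- A single folding map sends `Ker X_{n+1}` into `Ker X_n`. -/
lemma Xk_fold_eq_zero (n : ℕ) (hn : 1 ≤ n) (L : Gam (n + 1)) (hL : Xk (n + 1) L = 0) :
    Xk n (Finsupp.mapDomain (foldLG n hn) L) = 0 := by
  ext d
  rw [coeff_Xk, Finsupp.sum_mapDomain_index (by simp) (by intros; ring)]
  simp only [XLG_foldLG, Finset.mul_sum]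
  rw [Finsupp.sum, Finset.sum_comm, map_zero]
  refine Finset.sum_eq_zero fun e _ => ?_
  have h := congrArg (MvPowerSeries.coeff e) hL
  rwa [coeff_Xk, map_zero] at h

/-- if `L ∈ Γ_k` lies in `Ker(X_k)`, then its projection
`π(L) = (π_{Γ₂} ∘ … ∘ π_{Γ_k})(L) ∈ Γ₁` lies in `Ker(X₁)`; that is, the corresponding
linear combination of ordinary chromatic symmetric functions vanishes. -/
theorem stmt8 (n : ℕ) (L : Gam (n + 1)) (hL : Xk (n + 1) L = 0) :
    Xk 1 (Finsupp.mapDomain (foldToOne n) L) = 0 := by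
  induction n with
  | zero =>
    have h : foldToOne 0 = id := rfl
    rwa [h, Finsupp.mapDomain_id]
  | succ n ih =>
    have h : foldToOne (n + 1) = foldToOne n ∘ foldLG (n + 1) (by omega) := rfl
    rw [h, Finsupp.mapDomain_comp]
    exact ih _ (Xk_fold_eq_zero (n + 1) (by omega) L hL)
end

section
/- Let G be a k-vertex-labelled graph with vertex set V = V₁ ⊔ … ⊔ V_k, let σ ∈ S_{V₁} × … × S_{V_k}, so G − G_σ ∈ T_iso(k). Let H* be an augmentation of G, and let σ' be the permutation of V(H*) that is the identity on V_{k+1} and restricts to σ on V. Then Lift(G;H*) − Lift(G_σ;H*_{σ'}) ∈ T_iso(k+1). -/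
/-- The inclusion of the vertex labels of a `k`-vertex-labelled graph into those of a
`(k+1)`-vertex-labelled graph. -/
def liftV {k : ℕ} (p : Fin k × ℕ) : Fin (k + 1) × ℕ := (p.1.castSucc, p.2)

/-- `Lift(H; H*) = H* ⊎ E(H)`. -/
noncomputable def liftLG {k : ℕ} (Hs : LG (k + 1)) (H : LG k) : LG (k + 1) :=
  Hs.addE (H.edges.map (Sym2.map liftV))

/-- Transport of a permutation of `Fin m` along an equality `m = n`. -/
def castPerm {m n : ℕ} (h : m = n) (σ : Equiv.Perm (Fin m)) : Equiv.Perm (Fin n) :=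
  (finCongr h).permCongr σ

/-- The permutation `σ'` of the vertices of the augmentation `H*` that is the identity
on `V_{k+1}` and restricts to `σ` on `V₁ ⊔ … ⊔ V_k`. -/
def extendPerm {k : ℕ} (Hs : LG (k + 1)) (α : Fin k → ℕ)
    (hAug : ∀ i : Fin k, Hs.α i.castSucc = α i) (σ : ∀ i, Equiv.Perm (Fin (α i))) :
    ∀ i : Fin (k + 1), Equiv.Perm (Fin (Hs.α i)) :=
  fun i =>
    if h : i.val < k then
      castPerm
        (by have hi : (⟨i.val, h⟩ : Fin k).castSucc = i := Fin.ext (by simp)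
            rw [← hAug ⟨i.val, h⟩, hi])
        (σ ⟨i.val, h⟩)
    else Equiv.refl _

/-- On the image of the old vertices, the extended permutation acts as `σ`. -/
theorem permFun_extendPerm_liftV {k : ℕ} (Hs : LG (k + 1)) (α : Fin k → ℕ)
    (hAug : ∀ i : Fin k, Hs.α i.castSucc = α i) (σ : ∀ i, Equiv.Perm (Fin (α i)))
    (p : Fin k × ℕ) :
    permFun Hs.α (extendPerm Hs α hAug σ) (liftV p) = liftV (permFun α σ p) := by
  obtain rfl : (fun i : Fin k => Hs.α i.castSucc) = α := funext hAug
  obtain ⟨i, j⟩ := p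
  by_cases h : j < Hs.α i.castSucc
  · simp [permFun, liftV, h, extendPerm, castPerm]
    rfl
  · simp [permFun, liftV, h]

/-- Every edge of `H` is valid in an augmentation of `H`, so the lift keeps all of them. -/
theorem liftLG_edges {k : ℕ} (Hs : LG (k + 1)) (H : LG k)
    (hAug : ∀ i : Fin k, Hs.α i.castSucc = H.α i) :
    (liftLG Hs H).edges = Hs.edges + H.edges.map (Sym2.map liftV) := by
  classical
  unfold liftLG LG.addE
  simp only [add_right_inj]
  rw [Multiset.filter_eq_self]
  intro e he p hp
  obtain ⟨e₀, he₀, rfl⟩ := Multiset.mem_map.1 he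
  obtain ⟨q, hq, rfl⟩ := Sym2.mem_map.1 hp
  exact (H.valid e₀ he₀ q hq).trans_eq (hAug q.1).symm

theorem LG.ext_of {k : ℕ} {G H : LG k} (hα : G.α = H.α) (he : G.edges = H.edges) : G = H := by
  cases G
  cases H
  cases hα
  cases he
  rfl

/-- Lifting commutes with relabelling: `Lift(G_σ; H*_{σ'}) = Lift(G; H*)_{σ'}`. -/
theorem liftLG_permute {k : ℕ} (G : LG k) (σ : ∀ i, Equiv.Perm (Fin (G.α i)))
    (Hs : LG (k + 1)) (hAug : ∀ i : Fin k, Hs.α i.castSucc = G.α i) :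
    liftLG (Hs.permute (extendPerm Hs G.α hAug σ)) (G.permute σ) =
      (liftLG Hs G).permute (extendPerm Hs G.α hAug σ) := by
  refine LG.ext_of rfl ?_
  rw [liftLG_edges (Hs.permute (extendPerm Hs G.α hAug σ)) (G.permute σ) hAug]
  change Hs.edges.map _ + (G.edges.map _).map _ = (liftLG Hs G).edges.map _
  rw [liftLG_edges Hs G hAug, Multiset.map_add, Multiset.map_map, Multiset.map_map]
  refine congrArg₂ _ rfl (Multiset.map_congr rfl fun e _ => ?_)
  simp only [Function.comp_apply, Sym2.map_map]
  exact congrArg (fun f => Sym2.map f e)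
    (funext fun p => (permFun_extendPerm_liftV Hs G.α hAug σ p).symm)

/-- let `G` be a `k`-vertex-labelled graph,
`σ ∈ S_{V₁} × … × S_{V_k}` (so `G − G_σ ∈ T_iso(k)`), `H*` an augmentation of `G`, and
`σ'` the extension of `σ` by the identity on `V_{k+1}`.  Then
`Lift(G; H*) − Lift(G_σ; H*_{σ'}) ∈ T_iso(k+1)`. -/
theorem stmt10 (k : ℕ) (G : LG k) (σ : ∀ i, Equiv.Perm (Fin (G.α i)))
    (Hs : LG (k + 1)) (hAug : ∀ i : Fin k, Hs.α i.castSucc = G.α i) :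
    Finsupp.single (liftLG Hs G) (1 : ℚ)
      - Finsupp.single (liftLG (Hs.permute (extendPerm Hs G.α hAug σ)) (G.permute σ)) 1
      ∈ Tiso (k + 1) := by
  exact ⟨liftLG Hs G, extendPerm Hs G.α hAug σ, by rw [liftLG_permute]⟩
end

section
/- Suppose G is a finite simple graph with four vertices u, v, w, z such that uz, uw, zw, vw ∈ E(G) and uv, zv ∉ E(G), and suppose there exists an automorphism φ of the graph G − wz − wu (G with edges wz and wu deleted) such that φ({u,w}) = {v,z} and φ({v,z}) = {u,w}. Then G and the graph G − uw + vz (G with edge uw deleted and edge vz added) have equal chromatic symmetric functions: X_G = X_{G−uw+vz}. -/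
/-!
Let `H = G − wz − wu`.  Proper colorings of `G` are the proper colorings of `H` with
`κ w ≠ κ z` and `κ w ≠ κ u`; those of `G − uw + vz` are the proper colorings of `H` with
`κ w ≠ κ z` and `κ v ≠ κ z`.  So, with a common finite set `S` of colorings of `H` with
`κ w ≠ κ z` and a prescribed monomial, it suffices to remove equally many elements from `S`
in both cases.  In the removed colorings `κ w ≠ κ z` is automatic, since `uz` and `vw` are
edges of `H`; hence they are just the colorings of `H` with `κ w = κ u`, respectively
`κ v = κ z`, and composition with `φ` maps each of these two sets injectively into the other
(`mapsTo_comp_iso`).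
-/

/-- The chromatic symmetric function of a finite simple graph, given by its
coefficients: the coefficient of a monomial `d` is the number of proper colorings
`κ : V → ℕ` with `Π_v x_{κ(v)} = x^d`. -/
noncomputable def Xsg {V : Type} [Fintype V] (G : SimpleGraph V) : MvPowerSeries ℕ ℚ :=
  fun d => (Nat.card {κ : V → ℕ //
    (∀ u v : V, G.Adj u v → κ u ≠ κ v) ∧ ∑ v : V, Finsupp.single (κ v) 1 = d} : ℚ)

/-- The proper colorings of `G` whose monomial is `x ^ d`. -/
def colorings {V : Type} [Fintype V] (G : SimpleGraph V) (d : ℕ →₀ ℕ) : Set (V → ℕ) :=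
  {κ | (∀ u v : V, G.Adj u v → κ u ≠ κ v) ∧ ∑ v : V, Finsupp.single (κ v) 1 = d}

/-- Only finitely many colorings have a given monomial: all colors lie in its support. -/
lemma finite_colorings_s12 {V : Type} [Fintype V] (G : SimpleGraph V) (d : ℕ →₀ ℕ) :
    (colorings G d).Finite := by
  refine (Set.Finite.pi' (fun _ : V => d.support.finite_toSet)).subset ?_
  rintro κ ⟨-, rfl⟩ a
  simp only [Finset.mem_coe, Finsupp.mem_support_iff, Finsupp.finsetSum_apply]
  intro h
  simpa using Finset.sum_eq_zero_iff.mp h a (Finset.mem_univ a)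

/-- Precomposition with an automorphism preserves properness and the monomial. -/
lemma comp_iso_mem {V : Type} [Fintype V] {G : SimpleGraph V} (φ : G ≃g G) {d : ℕ →₀ ℕ}
    {κ : V → ℕ} (h : κ ∈ colorings G d) : κ ∘ φ ∈ colorings G d := by
  refine ⟨fun a b hab => h.1 _ _ (φ.map_adj_iff.mpr hab), ?_⟩
  rw [← h.2]
  exact Equiv.sum_comp φ.toEquiv (fun a => Finsupp.single (κ a) 1)

/-- If an automorphism sends `{a, b}` to `{p, q}`, precomposition with it turns colorings
identifying `p` and `q` into colorings identifying `a` and `b`. -/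
lemma mapsTo_comp_iso {V : Type} [Fintype V] {G : SimpleGraph V} (φ : G ≃g G) (d : ℕ →₀ ℕ)
    {a b p q : V} (hφ : ({φ a, φ b} : Set V) = {p, q}) :
    Set.MapsTo (fun κ : V → ℕ => κ ∘ φ) {κ ∈ colorings G d | κ p = κ q}
      {κ ∈ colorings G d | κ a = κ b} := by
  rintro κ ⟨hκ, hpq⟩
  refine ⟨comp_iso_mem φ hκ, ?_⟩
  rcases Set.pair_eq_pair_iff.mp hφ with ⟨h, h'⟩ | ⟨h, h'⟩ <;> simp [h, h', hpq]

lemma ncard_le_of_iso {V : Type} [Fintype V] {G : SimpleGraph V} (φ : G ≃g G) (d : ℕ →₀ ℕ)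
    {a b p q : V} (hφ : ({φ a, φ b} : Set V) = {p, q}) :
    {κ ∈ colorings G d | κ p = κ q}.ncard ≤ {κ ∈ colorings G d | κ a = κ b}.ncard :=
  Set.ncard_le_ncard_of_injOn _ (mapsTo_comp_iso φ d hφ)
    (φ.surjective.injective_comp_right.injOn) ((finite_colorings_s12 G d).subset (Set.sep_subset _ _))

/-- suppose `G` has four vertices `u, v, w, z` with
`uz, uw, zw, vw ∈ E(G)` and `uv, zv ∉ E(G)`, and suppose there is an automorphism `φ`
of `G − wz − wu` with `φ({u,w}) = {v,z}` and `φ({v,z}) = {u,w}`.  Then `G` and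
`G − uw + vz` have equal chromatic symmetric functions. -/
theorem stmt12 {V : Type} [Fintype V] [DecidableEq V] (G : SimpleGraph V)
    (u v w z : V)
    (huv : u ≠ v) (huw : u ≠ w) (huz : u ≠ z) (hvw : v ≠ w) (hvz : v ≠ z) (hwz : w ≠ z)
    (h1 : G.Adj u z) (h2 : G.Adj u w) (h3 : G.Adj z w) (h4 : G.Adj v w)
    (h5 : ¬ G.Adj u v) (h6 : ¬ G.Adj z v)
    (φ : G.deleteEdges {s(w, z), s(w, u)} ≃g G.deleteEdges {s(w, z), s(w, u)})
    (hφ1 : ({φ u, φ w} : Set V) = {v, z})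
    (hφ2 : ({φ v, φ z} : Set V) = {u, w}) :
    Xsg G = Xsg (G.deleteEdges {s(u, w)} ⊔ SimpleGraph.fromEdgeSet {s(v, z)}) := by
  funext d
  have hcard : {κ ∈ colorings (G.deleteEdges {s(w, z), s(w, u)}) d | κ w = κ u}.ncard =
      {κ ∈ colorings (G.deleteEdges {s(w, z), s(w, u)}) d | κ v = κ z}.ncard :=
    le_antisymm (ncard_le_of_iso φ d (by rw [hφ2, Set.pair_comm]))
      (ncard_le_of_iso φ d (by rw [Set.pair_comm, hφ1]))
  set H := G.deleteEdges {s(w, z), s(w, u)} with hH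
  have huz' : H.Adj u z := by
    simp [hH, SimpleGraph.deleteEdges_adj, h1, huw, huz, hwz.symm]
  have hvw' : H.Adj v w := by
    simp [hH, SimpleGraph.deleteEdges_adj, h4, hvw, hvz, huv.symm]
  have hG : colorings G d =
      {κ ∈ colorings H d | κ w ≠ κ z} \ {κ ∈ colorings H d | κ w = κ u} := by
    ext κ
    constructor
    · rintro ⟨hp, hd⟩
      exact ⟨⟨⟨fun a b hab => hp a b (SimpleGraph.deleteEdges_le _ hab), hd⟩,
        hp w z h3.symm⟩, fun h => hp w u h2.symm h.2⟩
    · rintro ⟨⟨hκ, hwz'⟩, hwu'⟩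
      refine ⟨fun a b hab heq => ?_, hκ.2⟩
      have hwu : κ w ≠ κ u := fun h => hwu' ⟨hκ, h⟩
      by_cases hm : s(a, b) ∈ ({s(w, z), s(w, u)} : Set (Sym2 V))
      · simp only [Set.mem_insert_iff, Set.mem_singleton_iff, Sym2.eq_iff] at hm
        grind
      · exact hκ.1 a b (SimpleGraph.deleteEdges_adj.mpr ⟨hab, hm⟩) heq
  have hG' : colorings (G.deleteEdges {s(u, w)} ⊔ SimpleGraph.fromEdgeSet {s(v, z)}) d =
      {κ ∈ colorings H d | κ w ≠ κ z} \ {κ ∈ colorings H d | κ v = κ z} := by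
    ext κ
    constructor
    · rintro ⟨hp, hd⟩
      refine ⟨⟨⟨fun a b hab => hp a b (Or.inl ?_), hd⟩, hp w z (Or.inl ?_)⟩,
        fun h => hp v z (Or.inr ?_) h.2⟩
      · rw [hH, SimpleGraph.deleteEdges_adj] at hab
        rw [SimpleGraph.deleteEdges_adj]
        refine ⟨hab.1, fun h => hab.2 (Or.inr ?_)⟩
        rw [Set.mem_singleton_iff] at h ⊢
        rw [h, Sym2.eq_swap]
      · simp [SimpleGraph.deleteEdges_adj, h3.symm, huw.symm, huz.symm]
      · simp [hvz]
    · rintro ⟨⟨hκ, hwz'⟩, hvz''⟩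
      refine ⟨fun a b hab heq => ?_, hκ.2⟩
      have hvz' : κ v ≠ κ z := fun h => hvz'' ⟨hκ, h⟩
      rcases hab with hab | hab
      · rw [SimpleGraph.deleteEdges_adj] at hab
        by_cases hm : s(a, b) = s(w, z)
        · rw [Sym2.eq_iff] at hm
          grind
        · refine hκ.1 a b (SimpleGraph.deleteEdges_adj.mpr ⟨hab.1, ?_⟩) heq
          rintro (h | h)
          · exact hm h
          · exact hab.2 (Set.mem_singleton_iff.mpr (h.trans Sym2.eq_swap))
      · rw [SimpleGraph.fromEdgeSet_adj, Set.mem_singleton_iff, Sym2.eq_iff] at hab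
        grind
  have key : (colorings G d).ncard =
      (colorings (G.deleteEdges {s(u, w)} ⊔ SimpleGraph.fromEdgeSet {s(v, z)}) d).ncard := by
    have hfin := finite_colorings_s12 H d
    rw [hG, hG', Set.ncard_sdiff _ (hfin.subset (Set.sep_subset _ _)),
      Set.ncard_sdiff _ (hfin.subset (Set.sep_subset _ _)), hcard]
    · rintro κ ⟨hκ, h⟩
      exact ⟨hκ, fun h' => hκ.1 v w hvw' (h.trans h'.symm)⟩
    · rintro κ ⟨hκ, h⟩
      exact ⟨hκ, fun h' => hκ.1 u z huz' (h.symm.trans h')⟩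
  exact congrArg (Nat.cast : ℕ → ℚ) key
end
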